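/- arXiv:1008.0144 — 2 statements merged into one kernel-verified Lean document; each statement's English description precedes it below -/
import Mathlib

section
/- Let ν > −1, N ≥ 1, and let a₁, …, a_N be distinct positive reals. Define, for y > 0, Q(y) = Σ_{ℓ=1}^N [ (1/2) (y/a_ℓ)^{ν/2} e^{−(a_ℓ+y)/2} I_ν(√(a_ℓ y)) / ∏_{k≠ℓ} (a_ℓ − a_k) ]. Then ∫₀^∞ Q(y) y^i dy = 0 for every integer 0 ≤ i ≤ N−2, and ∫₀^∞ Q(y) y^{N−1} dy = 1. -/
open MeasureTheory Real

/-- The modified Bessel function of the first kind `I_ν(z)`. -/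
noncomputable def besselI (ν z : ℝ) : ℝ :=
  ∑' n : ℕ, ((1 : ℝ) / (Real.Gamma ((n : ℝ) + 1) * Real.Gamma ((n : ℝ) + 1 + ν))) *
    (z / 2) ^ (2 * (n : ℝ) + ν)

/-- Type-I multiple orthogonal function `Q` associated with the modified Bessel
weight, in its residue-sum representation for distinct points `a ℓ`. -/
noncomputable def typeIQ (ν : ℝ) {N : ℕ} (a : Fin N → ℝ) (y : ℝ) : ℝ :=
  ∑ ℓ : Fin N,
    (1 / 2) * (y / a ℓ) ^ (ν / 2) * Real.exp (-(a ℓ + y) / 2) *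
      besselI ν (Real.sqrt (a ℓ * y)) / ∏ k ∈ Finset.univ.erase ℓ, (a ℓ - a k)

lemma hasSum_transport {f g : ℕ → ℝ} {s t : ℝ} (h : HasSum g t) (hf : ∀ n, f n = g n)
    (hs : s = t) : HasSum f s := by
  obtain rfl : f = g := funext hf
  subst hs
  exact h

/-- Moment polynomials. -/
noncomputable def momPoly : ℕ → ℝ → Polynomial ℝ
  | 0, _ => 1
  | i + 1, c => Polynomial.C (2 * c) * momPoly i (c + 1) + Polynomial.X * momPoly i (c + 2)

lemma momPoly_degree (i : ℕ) : ∀ c : ℝ, (momPoly i c).natDegree ≤ i ∧ (momPoly i c).coeff i = 1 := by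
  induction i with
  | zero => intro c; simp [momPoly]
  | succ i ih =>
    intro c
    obtain ⟨h1, h2⟩ := ih (c + 1)
    obtain ⟨h3, h4⟩ := ih (c + 2)
    constructor
    · rw [momPoly]
      refine (Polynomial.natDegree_add_le _ _).trans (max_le ?_ ?_)
      · refine (Polynomial.natDegree_C_mul_le _ _).trans (by omega)
      · refine Polynomial.natDegree_mul_le.trans ?_
        have := Polynomial.natDegree_X_le (R := ℝ)
        omega
    · rw [momPoly, Polynomial.coeff_add, Polynomial.coeff_C_mul, Polynomial.coeff_X_mul, h4,
        Polynomial.coeff_eq_zero_of_natDegree_lt (by omega)]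
      simp

lemma momPoly_hasSum (x : ℝ) (i : ℕ) : ∀ c : ℝ, 0 < c →
    HasSum (fun n : ℕ => (x / 2) ^ n / (n.factorial : ℝ) *
      (2 ^ i * Gamma (n + c + i) / Gamma (n + c))) (exp (x / 2) * (momPoly i c).eval x) := by
  induction i with
  | zero =>
    intro c hc
    have h := NormedSpace.expSeries_div_hasSum_exp (𝔸 := ℝ) (x / 2)
    rw [← Real.exp_eq_exp_ℝ] at h
    refine hasSum_transport h ?_ ?_
    · intro n
      have : Gamma (n + c) ≠ 0 := (Gamma_pos_of_pos (by positivity)).ne'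
      simp [this]
    · simp [momPoly]
  | succ i ih =>
    intro c hc
    have h1 := (ih (c + 1) (by linarith)).mul_left (2 * c)
    have h2 := (ih (c + 2) (by linarith)).mul_left x
    have h3 : HasSum (fun n : ℕ => 2 * n * ((x / 2) ^ n / (n.factorial : ℝ) *
        (2 ^ i * Gamma (n + (c + 1) + i) / Gamma (n + (c + 1)))))
        (x * (exp (x / 2) * (momPoly i (c + 2)).eval x)) := by
      rw [← hasSum_nat_add_iff' 1]
      simp only [Finset.range_one, Finset.sum_singleton, Nat.cast_zero, mul_zero, zero_mul, sub_zero]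
      refine hasSum_transport h2 (fun n => ?_) rfl
      rw [Nat.factorial_succ, pow_succ]
      push_cast
      have e : (n : ℝ) + 1 + (c + 1) = n + (c + 2) := by ring
      rw [e]
      have : (n.factorial : ℝ) ≠ 0 := by positivity
      have : (n : ℝ) + 1 ≠ 0 := by positivity
      field_simp
    refine hasSum_transport (h1.add h3) ?_ ?_
    · intro n
      have hg : Gamma (n + c) ≠ 0 := (Gamma_pos_of_pos (by positivity)).ne'
      have hn : (n : ℝ) + c ≠ 0 := by positivity
      have e : (n : ℝ) + (c + 1) = n + c + 1 := by ring
      have e2 : (n : ℝ) + c + ((i + 1 : ℕ) : ℝ) = n + c + 1 + i := by push_cast; ring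
      rw [e, e2, Gamma_add_one hn]
      field_simp
      ring
    · simp [momPoly]; ring

/-- The weight. -/
noncomputable def wgt (ν a y : ℝ) : ℝ :=
  (1 / 2) * (y / a) ^ (ν / 2) * Real.exp (-(a + y) / 2) * besselI ν (Real.sqrt (a * y))

lemma wgt_term (ν a y : ℝ) (ha : 0 < a) (hy : 0 < y) (n i : ℕ) :
    (1 / 2) * (y / a) ^ (ν / 2) * Real.exp (-(a + y) / 2) *
      (((1 : ℝ) / (Real.Gamma ((n : ℝ) + 1) * Real.Gamma ((n : ℝ) + 1 + ν))) *
    (Real.sqrt (a * y) / 2) ^ (2 * (n : ℝ) + ν)) * y ^ i =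
    (exp (-a / 2) * ((a / 2) ^ n / (n.factorial : ℝ) / Gamma (n + (ν + 1)) *
      (1 / 2) ^ (n + (ν + 1) : ℝ))) * (y ^ (n + (ν + 1) + i - 1 : ℝ) * exp (-((1 / 2) * y))) := by
  have e1 : Gamma ((n : ℝ) + 1) = n.factorial := Gamma_nat_eq_factorial n
  have e2 : (Real.sqrt (a * y) / 2) ^ (2 * (n : ℝ) + ν) =
      a ^ n * a ^ (ν / 2) * (y ^ n * y ^ (ν / 2)) * ((1 / 2) ^ n * (1 / 2) ^ (n + ν : ℝ)) := by
    rw [Real.sqrt_eq_rpow, div_eq_mul_one_div, mul_rpow (by positivity) (by positivity),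
      ← rpow_mul (by positivity), mul_rpow ha.le hy.le]
    have : 1 / 2 * (2 * (n : ℝ) + ν) = n + ν / 2 := by ring
    rw [this, rpow_add ha, rpow_add hy, rpow_natCast, rpow_natCast]
    have : 2 * (n : ℝ) + ν = n + (n + ν) := by ring
    rw [this, rpow_add (by norm_num) (n : ℝ) (n + ν), rpow_natCast]
  have e3 : y ^ (n + (ν + 1) + i - 1 : ℝ) = y ^ n * (y ^ (ν / 2) * y ^ (ν / 2)) * y ^ i := by
    rw [← rpow_add hy, ← rpow_natCast, ← rpow_natCast, ← rpow_add hy, ← rpow_add hy]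
    congr 1; ring
  have e4 : ((1 : ℝ) / 2) ^ (n + (ν + 1) : ℝ) = (1 / 2) ^ (n + ν : ℝ) * (1 / 2) := by
    rw [← add_assoc, rpow_add (by norm_num), rpow_one]
  have e5 : exp (-(a + y) / 2) = exp (-a / 2) * exp (-((1 / 2) * y)) := by
    rw [← exp_add]; congr 1; ring
  have e6 : (n : ℝ) + 1 + ν = n + (ν + 1) := by ring
  have ha' : a ^ (ν / 2) ≠ 0 := (rpow_pos_of_pos ha _).ne'
  rw [e1, e2, e3, e4, e5, e6, div_rpow hy.le ha.le, div_pow, div_pow, one_pow]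
  field_simp

lemma wgt_moment (ν : ℝ) (hν : -1 < ν) (a : ℝ) (ha : 0 < a) (i : ℕ) :
    ∫ y in Set.Ioi (0 : ℝ), wgt ν a y * y ^ i = (momPoly i (ν + 1)).eval a := by
  have hc : 0 < ν + 1 := by linarith
  set K : ℕ → ℝ := fun n => exp (-a / 2) * ((a / 2) ^ n / (n.factorial : ℝ) / Gamma (n + (ν + 1)) *
      (1 / 2) ^ (n + (ν + 1) : ℝ)) with hK
  have hKnn : ∀ n, 0 ≤ K n := fun n => by
    have : 0 < Gamma (n + (ν + 1)) := Gamma_pos_of_pos (by positivity)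
    positivity
  set F : ℕ → ℝ → ℝ := fun n y =>
    K n * (y ^ (n + (ν + 1) + i - 1 : ℝ) * exp (-((1 / 2) * y))) with hF
  have hint : ∀ n, Integrable (F n) (volume.restrict (Set.Ioi 0)) := fun n => by
    refine Integrable.const_mul ?_ _
    have := integrableOn_rpow_mul_exp_neg_mul_rpow (p := 1) (s := n + (ν + 1) + i - 1)
      (b := 1 / 2) (by have : (0 : ℝ) < n + (ν + 1) + i := by positivity
                       linarith) one_pos (by norm_num)
    simpa [IntegrableOn] using this
  have hval : ∀ n, ∫ y in Set.Ioi (0 : ℝ), F n y = exp (-a / 2) *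
      ((a / 2) ^ n / (n.factorial : ℝ) *
      (2 ^ i * Gamma (n + (ν + 1) + i) / Gamma (n + (ν + 1)))) := fun n => by
    simp only [hF]
    rw [integral_const_mul, Real.integral_rpow_mul_exp_neg_mul_Ioi (by positivity) (by norm_num),
      hK]
    have : (1 / (1 / 2) : ℝ) ^ (n + (ν + 1) + i : ℝ) = ((1 / 2) ^ (n + (ν + 1) : ℝ))⁻¹ * 2 ^ i := by
      rw [← inv_rpow (by norm_num), rpow_add (by norm_num), rpow_natCast]
      norm_num
    rw [this]
    have : ((1 / 2 : ℝ) ^ (n + (ν + 1) : ℝ)) ≠ 0 := (rpow_pos_of_pos (by norm_num) _).ne'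
    field_simp
  have hs : HasSum (fun n => ∫ y in Set.Ioi (0 : ℝ), F n y) ((momPoly i (ν + 1)).eval a) := by
    simp only [hval]
    have := (momPoly_hasSum a i (ν + 1) hc).mul_left (exp (-a / 2))
    have e : exp (-a / 2) * exp (a / 2) = 1 := by
      rw [← exp_add, neg_div, neg_add_cancel, exp_zero]
    rwa [← mul_assoc, e, one_mul] at this
  have hs2 : Summable (fun n => ∫ y in Set.Ioi (0 : ℝ), ‖F n y‖) := by
    refine hs.summable.congr fun n => ?_
    refine setIntegral_congr_fun measurableSet_Ioi fun y hy => ?_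
    have hy' : 0 < y := hy
    have := hKnn n
    simp only [hF]
    rw [Real.norm_of_nonneg (by positivity)]
  rw [hs.unique (hasSum_integral_of_summable_integral_norm hint hs2)]
  refine setIntegral_congr_fun measurableSet_Ioi fun y hy => ?_
  simp only [wgt, besselI, hF, hK]
  rw [← tsum_mul_left, ← tsum_mul_right]
  exact tsum_congr fun n => wgt_term ν a y ha hy n i

lemma momPoly_pos (x : ℝ) (hx : 0 < x) (i : ℕ) : ∀ c : ℝ, 0 < c → 0 < (momPoly i c).eval x := by
  induction i with
  | zero => intro c hc; simp [momPoly]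
  | succ i ih =>
    intro c hc
    have h1 := ih (c + 1) (by linarith)
    have h2 := ih (c + 2) (by linarith)
    simp only [momPoly, Polynomial.eval_add, Polynomial.eval_mul, Polynomial.eval_C,
      Polynomial.eval_X]
    positivity

lemma typeIQ_moment (ν : ℝ) (hν : -1 < ν) (N : ℕ) (a : Fin N → ℝ)
    (hapos : ∀ ℓ, 0 < a ℓ) (hdist : Function.Injective a) (i : ℕ) (hi : i < N) :
    ∫ y in Set.Ioi (0 : ℝ), typeIQ ν a y * y ^ i = (momPoly i (ν + 1)).coeff (N - 1) := by
  have hint : ∀ ℓ, Integrable (fun y => wgt ν (a ℓ) y * y ^ i)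
      (volume.restrict (Set.Ioi 0)) := fun ℓ => by
    by_contra h
    have h1 := wgt_moment ν hν (a ℓ) (hapos ℓ) i
    rw [integral_undef h] at h1
    exact (momPoly_pos (a ℓ) (hapos ℓ) i (ν + 1) (by linarith)).ne h1
  have e : ∀ y, typeIQ ν a y * y ^ i = ∑ ℓ, (wgt ν (a ℓ) y * y ^ i) /
      ∏ k ∈ Finset.univ.erase ℓ, (a ℓ - a k) := fun y => by
    simp only [typeIQ, wgt, Finset.sum_mul]
    exact Finset.sum_congr rfl fun ℓ _ => by ring
  simp only [e]
  rw [integral_finsetSum _ fun ℓ _ => (hint ℓ).div_const _]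
  simp only [integral_div, wgt_moment ν hν _ (hapos _) i]
  have := Lagrange.coeff_eq_sum (s := Finset.univ) (v := a) hdist.injOn
    (P := momPoly i (ν + 1)) (by
      refine Polynomial.degree_le_natDegree.trans_lt ?_
      have := (momPoly_degree i (ν + 1)).1
      rw [Finset.card_univ, Fintype.card_fin]
      exact_mod_cast this.trans_lt hi)
  rw [Finset.card_univ, Fintype.card_fin] at this
  rw [this]

/-- Orthogonality relations of the type-I multiple orthogonal function:
`∫₀^∞ Q(y) yⁱ dy = 0` for `0 ≤ i ≤ N−2` and `∫₀^∞ Q(y) y^{N−1} dy = 1`. -/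
theorem typeIQ_orthogonality
    (ν : ℝ) (hν : -1 < ν) (N : ℕ) (hN : 1 ≤ N) (a : Fin N → ℝ)
    (hapos : ∀ ℓ, 0 < a ℓ) (hdist : Function.Injective a) :
    (∀ i : ℕ, i + 2 ≤ N → ∫ y in Set.Ioi (0 : ℝ), typeIQ ν a y * y ^ i = 0) ∧
      ∫ y in Set.Ioi (0 : ℝ), typeIQ ν a y * y ^ (N - 1) = 1 := by
  refine ⟨fun i hi => ?_, ?_⟩
  · rw [typeIQ_moment ν hν N a hapos hdist i (by omega)]
    have := (momPoly_degree i (ν + 1)).1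
    exact Polynomial.coeff_eq_zero_of_natDegree_lt (by omega)
  · rw [typeIQ_moment ν hν N a hapos hdist (N - 1) (by omega)]
    exact (momPoly_degree (N - 1) (ν + 1)).2
end

section
/- Let ν > −1, N ≥ 1, let 0 < a₁ < ⋯ < a_N be distinct positive reals, let t > 0, let 1 ≤ n ≤ N, and let x₁, …, x_n be distinct positive reals. Define the correlation kernel K_t(x, y) = Σ_{ℓ=1}^N p^{(ν)}(t, x | a_ℓ) · ∫₀^∞ [ ∏_{k ≠ ℓ} (a_k + v)/(a_k − a_ℓ) ] · q^{(ν)}_t(v, y) dv. Then the single-time n-point correlation function of the noncolliding BESQ^{(ν)} process started at (a₁, …, a_N) equals a determinant: (1/(N−n)!) · ∫_{(0,∞)^{N−n}} [ ∏_{1≤i<j≤N} (x_j − x_i) / ∏_{1≤i<j≤N} (a_j − a_i) ] · det_{1≤i,j≤N}[ p^{(ν)}(t, x_i | a_j) ] dx_{n+1} ⋯ dx_N = det_{1≤i,j≤n}[ K_t(x_i, x_j) ]. -/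
open MeasureTheory Real

/-- The Bessel function of the first kind `J_ν(z)`. -/
noncomputable def besselJ (ν z : ℝ) : ℝ :=
  ∑' n : ℕ, ((-1 : ℝ) ^ n / (Real.Gamma ((n : ℝ) + 1) * Real.Gamma ((n : ℝ) + 1 + ν))) *
    (z / 2) ^ (2 * (n : ℝ) + ν)

/-- The BESQ^{(ν)} transition probability density `p^{(ν)}(t, y | x)`. -/
noncomputable def besqP (ν t y x : ℝ) : ℝ :=
  (1 / (2 * t)) * (y / x) ^ (ν / 2) * Real.exp (-(x + y) / (2 * t)) *
    besselI ν (Real.sqrt (x * y) / t)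

/-- The kernel `q^{(ν)}_t(v, y)`, real form of `p^{(ν)}(−t, −v | y)`. -/
noncomputable def besqQ (ν t v y : ℝ) : ℝ :=
  (1 / (2 * t)) * (v / y) ^ (ν / 2) * Real.exp ((y - v) / (2 * t)) *
    besselJ ν (Real.sqrt (v * y) / t)

/-- The single-time correlation kernel
`K_t(x, y) = Σ_ℓ p^{(ν)}(t, x|a_ℓ) ∫₀^∞ ∏_{k≠ℓ} (a_k+v)/(a_k−a_ℓ) q^{(ν)}_t(v, y) dv`. -/
noncomputable def corrK (ν : ℝ) {N : ℕ} (a : Fin N → ℝ) (t x y : ℝ) : ℝ :=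
  ∑ ℓ : Fin N, besqP ν t x (a ℓ) *
    ∫ v in Set.Ioi (0 : ℝ),
      (∏ k ∈ Finset.univ.erase ℓ, ((a k + v) / (a k - a ℓ))) * besqQ ν t v y

/-- The Vandermonde product `h_N(x) = ∏_{i<j} (x_j − x_i)`. -/
noncomputable def vdm {N : ℕ} (x : Fin N → ℝ) : ℝ :=
  ∏ i : Fin N, ∏ j ∈ Finset.Ioi i, (x j - x i)

/-- Extension of `x : Fin n → ℝ` by the integration variables `z : Fin (N−n) → ℝ`. -/
noncomputable def extendConfig {N n : ℕ} (hn : n ≤ N) (x : Fin n → ℝ)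
    (z : Fin (N - n) → ℝ) : Fin N → ℝ :=
  fun i => if h : (i : ℕ) < n then x ⟨i, h⟩
    else z ⟨(i : ℕ) - n, by have := i.isLt; omega⟩


section Comb
open Finset Equiv

/-- Permutations fixing every `Sum.inr` (resp. `inl`) come from one factor. -/
lemma perm_fix_inr {α β : Type*} [Finite α] [Finite β]
    (θ : Perm (α ⊕ β)) (h : ∀ b, θ (Sum.inr b) = Sum.inr b) :
    ∃ ρ : Perm α, Equiv.Perm.sumCongr ρ 1 = θ := by
  have h2 : θ ∈ (Perm.sumCongrHom α β).range := by
    rw [← inv_mem_iff]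
    apply Perm.mem_sumCongrHom_range_of_perm_mapsTo_inl
    rintro _ ⟨i, rfl⟩
    rcases hi : θ⁻¹ (Sum.inl i) with j | b
    · exact ⟨j, rfl⟩
    · rw [Perm.inv_eq_iff_eq, h b] at hi
      cases hi
  obtain ⟨⟨ρ, κ⟩, h3⟩ := h2
  refine ⟨ρ, ?_⟩
  have h4 : κ = 1 := by
    ext i
    have := h i
    rw [← h3] at this
    simpa using this
  subst h4
  rw [← h3]; rfl

lemma perm_fix_inl {α β : Type*} [Finite α] [Finite β]
    (θ : Perm (α ⊕ β)) (h : ∀ b, θ (Sum.inl b) = Sum.inl b) :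
    ∃ ρ : Perm β, Equiv.Perm.sumCongr 1 ρ = θ := by
  have h2 : θ ∈ (Perm.sumCongrHom α β).range := by
    apply Perm.mem_sumCongrHom_range_of_perm_mapsTo_inl
    rintro _ ⟨i, rfl⟩
    exact ⟨i, (h i).symm⟩
  obtain ⟨⟨ρ, κ⟩, h3⟩ := h2
  refine ⟨κ, ?_⟩
  have h4 : ρ = 1 := by
    ext i
    have := h i
    rw [← h3] at this
    simpa using this
  subst h4
  rw [← h3]; rfl

/-- Number of permutations extending a given injection. -/
lemma card_extend {α β : Type*} [Fintype α] [Fintype β] [DecidableEq α] [DecidableEq β]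
    (f : α → α ⊕ β) (hf : Function.Injective f) :
    (univ.filter (fun σ : Perm (α ⊕ β) => (fun i => σ (Sum.inl i)) = f)).card
      = (Fintype.card β).factorial := by
  classical
  obtain ⟨σ₀, h₀⟩ := Equiv.Perm.exists_extending_pair (Sum.inl : α → α ⊕ β) f
    Sum.inl_injective hf
  rw [← Fintype.card_perm, ← Finset.card_univ]
  symm
  refine Finset.card_bij (fun ρ _ => σ₀ * Equiv.Perm.sumCongr 1 ρ) ?_ ?_ ?_
  · intro ρ _
    simp only [mem_filter, mem_univ, true_and]
    funext i
    simp only [Perm.mul_apply, Perm.sumCongr_apply, Sum.map_inl, Perm.one_apply]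
    exact h₀ i
  · intro ρ _ ρ' _ h
    have := mul_left_cancel h
    ext b
    have h2 := congrArg (fun θ : Perm (α ⊕ β) => θ (Sum.inr b)) this
    simpa using h2
  · intro σ hσ
    simp only [mem_filter, mem_univ, true_and] at hσ
    have h1 : ∀ i, (σ₀⁻¹ * σ) (Sum.inl i) = Sum.inl i := by
      intro i
      have := congrFun hσ i
      rw [Perm.mul_apply, this, Perm.inv_eq_iff_eq]
      exact (h₀ i).symm
    obtain ⟨ρ, h3⟩ := perm_fix_inl _ h1
    exact ⟨ρ, mem_univ _, by rw [h3, mul_inv_cancel_left]⟩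

lemma sum_perm_restrict {α β : Type*} [Fintype α] [Fintype β] [DecidableEq α] [DecidableEq β]
    (G : (α → α ⊕ β) → ℝ) (hG : ∀ f, ¬ Function.Injective f → G f = 0) :
    ∑ σ : Perm (α ⊕ β), G (fun i => σ (Sum.inl i))
      = (Fintype.card β).factorial * ∑ f : α → α ⊕ β, G f := by
  classical
  rw [← Finset.sum_fiberwise (s := univ) (g := fun σ : Perm (α ⊕ β) => fun i => σ (Sum.inl i)),
    Finset.mul_sum]
  refine Finset.sum_congr rfl fun f _ => ?_
  by_cases hf : Function.Injective f
  · rw [← card_extend f hf, ← nsmul_eq_mul]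
    apply Finset.sum_eq_card_nsmul
    intro σ hσ
    rw [(mem_filter.1 hσ).2]
  · rw [hG f hf, mul_zero]
    refine Finset.sum_eq_zero fun σ hσ => ?_
    rw [(mem_filter.1 hσ).2, hG f hf]

lemma det_apply_row {α : Type*} [Fintype α] [DecidableEq α] (M : Matrix α α ℝ) :
    M.det = ∑ σ : Perm α, ((Perm.sign σ : ℤ) : ℝ) * ∏ i, M i (σ i) := by
  rw [← Matrix.det_transpose, Matrix.det_apply']
  rfl

lemma det_sum_expand {α γ : Type*} [Fintype α] [Fintype γ] [DecidableEq α] [DecidableEq γ]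
    (A B : γ → α → ℝ) :
    ∑ f : α → γ, (∏ i, A (f i) i) * Matrix.det (Matrix.of fun i j => B (f i) j)
      = Matrix.det (Matrix.of fun i j => ∑ l, A l i * B l j) := by
  simp_rw [det_apply_row, Matrix.of_apply, Finset.prod_univ_sum, Fintype.piFinset_univ,
    Finset.mul_sum]
  rw [Finset.sum_comm]
  refine Finset.sum_congr rfl fun σ _ => Finset.sum_congr rfl fun f _ => ?_
  rw [Finset.prod_mul_distrib]
  ring

lemma integral_det {α β : Type*} [Fintype α] [Fintype β] [DecidableEq α] [DecidableEq β]
    (μ : Measure ℝ) [SigmaFinite μ] (φ ψ : α ⊕ β → ℝ → ℝ)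
    (hInt : ∀ l m, Integrable (fun y => φ l y * ψ m y) μ)
    (hbi : ∀ l m, ∫ y, φ l y * ψ m y ∂μ = if l = m then 1 else 0) (x : α → ℝ) :
    ∫ z, Matrix.det (Matrix.of fun r c => φ c (Sum.elim x z r)) *
        Matrix.det (Matrix.of fun r c => ψ c (Sum.elim x z r)) ∂(Measure.pi fun _ : β => μ)
      = (Fintype.card β).factorial *
        Matrix.det (Matrix.of fun i j => ∑ l, ψ l (x i) * φ l (x j)) := by
  classical
  have hexp : ∀ z : β → ℝ, Matrix.det (Matrix.of fun r c => φ c (Sum.elim x z r)) *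
        Matrix.det (Matrix.of fun r c => ψ c (Sum.elim x z r))
      = ∑ σ : Perm (α ⊕ β), ∑ θ : Perm (α ⊕ β),
          (((Perm.sign θ : ℤ) : ℝ) *
            ∏ i, (φ (σ (Sum.inl i)) (x i) * ψ (σ (θ (Sum.inl i))) (x i))) *
          ∏ b, (φ (σ (Sum.inr b)) (z b) * ψ (σ (θ (Sum.inr b))) (z b)) := by
    intro z
    rw [det_apply_row, det_apply_row, Finset.sum_mul]
    refine Finset.sum_congr rfl fun σ _ => ?_
    rw [Finset.mul_sum, ← Equiv.sum_comp (Equiv.mulLeft σ)]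
    refine Finset.sum_congr rfl fun θ _ => ?_
    simp only [Matrix.of_apply, Fintype.prod_sum_type, Sum.elim_inl, Sum.elim_inr,
      Equiv.coe_mulLeft, Perm.mul_apply, Perm.sign_mul, Finset.prod_mul_distrib]
    have : ((Perm.sign σ : ℤ) : ℝ) * ((Perm.sign σ : ℤ) : ℝ) = 1 := by
      rcases Int.units_eq_one_or (Perm.sign σ) with h | h <;> simp [h]
    push_cast
    linear_combination (((Perm.sign θ : ℤ) : ℝ) * (∏ i, φ (σ (Sum.inl i)) (x i)) *
      (∏ i, ψ (σ (θ (Sum.inl i))) (x i)) * (∏ b, φ (σ (Sum.inr b)) (z b)) *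
      (∏ b, ψ (σ (θ (Sum.inr b))) (z b))) * this
  simp_rw [hexp]
  have hI : ∀ σ θ : Perm (α ⊕ β), Integrable (fun z : β → ℝ =>
      (((Perm.sign θ : ℤ) : ℝ) *
            ∏ i, (φ (σ (Sum.inl i)) (x i) * ψ (σ (θ (Sum.inl i))) (x i))) *
          ∏ b, (φ (σ (Sum.inr b)) (z b) * ψ (σ (θ (Sum.inr b))) (z b)))
          (Measure.pi fun _ : β => μ) := by
    intro σ θ
    refine Integrable.const_mul ?_ _
    exact Integrable.fintype_prod
      (f := fun b y => φ (σ (Sum.inr b)) y * ψ (σ (θ (Sum.inr b))) y) (fun b => hInt _ _)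
  rw [integral_finsetSum _ (fun σ _ => integrable_finsetSum _ fun θ _ => hI σ θ)]
  have hterm : ∀ σ : Perm (α ⊕ β), ∫ z, ∑ θ : Perm (α ⊕ β),
          (((Perm.sign θ : ℤ) : ℝ) *
            ∏ i, (φ (σ (Sum.inl i)) (x i) * ψ (σ (θ (Sum.inl i))) (x i))) *
          ∏ b, (φ (σ (Sum.inr b)) (z b) * ψ (σ (θ (Sum.inr b))) (z b))
          ∂(Measure.pi fun _ : β => μ)
      = (fun f : α → α ⊕ β => (∏ i, φ (f i) (x i)) *
          Matrix.det (Matrix.of fun i j => ψ (f i) (x j))) (fun i => σ (Sum.inl i)) := by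
    intro σ
    rw [integral_finsetSum _ (fun θ _ => hI σ θ)]
    have h1 : ∀ θ : Perm (α ⊕ β), ∫ z, (((Perm.sign θ : ℤ) : ℝ) *
            ∏ i, (φ (σ (Sum.inl i)) (x i) * ψ (σ (θ (Sum.inl i))) (x i))) *
          ∏ b, (φ (σ (Sum.inr b)) (z b) * ψ (σ (θ (Sum.inr b))) (z b))
          ∂(Measure.pi fun _ : β => μ)
        = if ∀ b, θ (Sum.inr b) = Sum.inr b then (((Perm.sign θ : ℤ) : ℝ) *
            ∏ i, (φ (σ (Sum.inl i)) (x i) * ψ (σ (θ (Sum.inl i))) (x i))) else 0 := by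
      intro θ
      rw [integral_const_mul, integral_fintype_prod_eq_prod
        (f := fun b y => φ (σ (Sum.inr b)) y * ψ (σ (θ (Sum.inr b))) y)]
      simp_rw [hbi]
      split_ifs with h
      · have h1 : ∀ b, (if σ (Sum.inr b) = σ (θ (Sum.inr b)) then (1 : ℝ) else 0) = 1 := by
          intro b
          rw [if_pos (by rw [h b])]
        simp_rw [h1]
        simp
      · push Not at h
        obtain ⟨b, hb⟩ := h
        rw [Finset.prod_eq_zero (mem_univ b), mul_zero]
        rw [if_neg]
        intro h'
        exact hb (σ.injective h').symm
    simp_rw [h1]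
    rw [← Finset.sum_filter]
    rw [Matrix.det_apply', Finset.mul_sum]
    symm
    refine Finset.sum_bij (fun ρ _ => Equiv.Perm.sumCongr ρ 1) ?_ ?_ ?_ ?_
    · intro ρ _
      simp
    · intro ρ _ ρ' _ h
      ext b
      have h2 := congrArg (fun θ : Perm (α ⊕ β) => θ (Sum.inl b)) h
      simpa using h2
    · intro θ hθ
      obtain ⟨ρ, h⟩ := perm_fix_inr θ (mem_filter.1 hθ).2
      exact ⟨ρ, mem_univ _, h⟩
    · intro ρ _
      simp only [Perm.sign_sumCongr, Perm.sign_one, mul_one, Perm.sumCongr_apply, Sum.map_inl,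
        Matrix.of_apply, Finset.prod_mul_distrib]
      ring
  rw [Finset.sum_congr rfl fun σ _ => hterm σ]
  rw [sum_perm_restrict (fun f : α → α ⊕ β => (∏ i, φ (f i) (x i)) *
          Matrix.det (Matrix.of fun i j => ψ (f i) (x j))),
    det_sum_expand (fun l i => φ l (x i)) (fun l i => ψ l (x i)), ← Matrix.det_transpose]
  · congr 2
    ext i j
    simp [mul_comm]
  · intro f hf
    rw [Function.Injective] at hf
    push Not at hf
    obtain ⟨i, j, hij, hne⟩ := hf
    rw [Matrix.det_zero_of_row_eq hne, mul_zero]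
    funext k
    simp [hij]

end Comb

section Analytic
open Polynomial

lemma hasSum_of_eq {f g : ℕ → ℝ} {a : ℝ} (h : HasSum f a) (e : ∀ n, g n = f n) :
    HasSum g a := by
  rwa [funext e]

lemma comp_neg_X_coeff' (p : ℝ[X]) (n : ℕ) : (p.comp (-X)).coeff n = p.coeff n * (-1) ^ n := by
  rw [← neg_one_mul, ← C_1, ← C_neg, Polynomial.comp_C_mul_X_coeff]

/-- Diagonal operator on polynomials. -/
noncomputable def diagOp (f : ℕ → ℝ) : ℝ[X] →ₗ[ℝ] ℝ[X] :=
  Polynomial.lsum (fun n => (f n) • (Polynomial.monomial n))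

lemma diagOp_monomial (f : ℕ → ℝ) (n : ℕ) (r : ℝ) :
    diagOp f (monomial n r) = monomial n (f n * r) := by
  simp [diagOp, Polynomial.lsum_apply, Polynomial.sum_monomial_index, smul_monomial]

lemma coeff_diagOp (f : ℕ → ℝ) (p : ℝ[X]) (n : ℕ) :
    (diagOp f p).coeff n = f n * p.coeff n := by
  induction p using Polynomial.induction_on' with
  | add p q hp hq => simp [hp, hq, mul_add]
  | monomial m r =>
    rw [diagOp_monomial, coeff_monomial, coeff_monomial]
    split_ifs with h
    · rw [h]
    · simp

/-- The operator `p ↦ (u ↦ ∫ p(v) F(u, v) dv)` on polynomials. -/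
noncomputable def popOp (c s : ℝ) (p : ℝ[X]) : ℝ[X] :=
  diagOp (fun n => (Gamma (c + n))⁻¹) (taylor s (diagOp (fun n => Gamma (c + n)) p))

lemma popOp_add (c s : ℝ) (p q : ℝ[X]) : popOp c s (p + q) = popOp c s p + popOp c s q := by
  simp [popOp]

lemma popOp_monomial (c s : ℝ) (k : ℕ) (r : ℝ) :
    popOp c s (monomial k r) =
      C (r * Gamma (c + k)) * diagOp (fun n => (Gamma (c + n))⁻¹) ((X + C s) ^ k) := by
  rw [popOp, diagOp_monomial, taylor_monomial, ← smul_eq_C_mul, map_smul, smul_eq_C_mul,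
    mul_comm r]

lemma diagOp_comp_neg (f : ℕ → ℝ) (p : ℝ[X]) : (diagOp f p).comp (-X) = diagOp f (p.comp (-X)) := by
  ext n
  rw [coeff_diagOp, comp_neg_X_coeff', comp_neg_X_coeff', coeff_diagOp]
  ring

lemma popOp_inv (c s : ℝ) (hc : 0 < c) (p : ℝ[X]) :
    popOp c s ((popOp c s (p.comp (-X))).comp (-X)) = p := by
  have hG : ∀ n : ℕ, Gamma (c + n) ≠ 0 := fun n => (Gamma_pos_of_pos (by positivity)).ne'
  have h1 : ∀ q : ℝ[X], diagOp (fun n => Gamma (c + n))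
      (diagOp (fun n => (Gamma (c + n))⁻¹) q) = q := by
    intro q; ext n; rw [coeff_diagOp, coeff_diagOp, mul_inv_cancel_left₀ (hG n)]
  have h2 : ∀ q : ℝ[X], diagOp (fun n => (Gamma (c + n))⁻¹)
      (diagOp (fun n => Gamma (c + n)) q) = q := by
    intro q; ext n; rw [coeff_diagOp, coeff_diagOp, inv_mul_cancel_left₀ (hG n)]
  have h3 : ∀ q : ℝ[X], taylor s ((taylor s (q.comp (-X))).comp (-X)) = q := by
    intro q
    simp only [taylor_apply, comp_assoc]
    simp
  rw [popOp, popOp, diagOp_comp_neg, h1, ← diagOp_comp_neg, h3, h2]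

lemma coeff_popOp_X_pow (c s : ℝ) (hc : 0 < c) (k : ℕ) :
    (popOp c s (X ^ k)).Monic ∧ (popOp c s (X ^ k)).natDegree = k := by
  have hG : ∀ n : ℕ, Gamma (c + n) ≠ 0 := fun n => (Gamma_pos_of_pos (by positivity)).ne'
  have hk : (popOp c s (X ^ k)).coeff k = 1 := by
    rw [← monomial_one_right_eq_X_pow, popOp_monomial, coeff_C_mul, coeff_diagOp,
      coeff_X_add_C_pow]
    simp [hG k]
  have hd : (popOp c s (X ^ k)).natDegree ≤ k := by
    rw [natDegree_le_iff_coeff_eq_zero]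
    intro n hn
    rw [← monomial_one_right_eq_X_pow, popOp_monomial, coeff_C_mul, coeff_diagOp,
      coeff_X_add_C_pow, Nat.choose_eq_zero_of_lt hn]
    simp
  have := monic_of_natDegree_le_of_coeff_eq_one k hd hk
  exact ⟨this, natDegree_eq_of_le_of_coeff_ne_zero hd (by rw [hk]; exact one_ne_zero)⟩

lemma natDegree_popOp_le (c s : ℝ) (p : ℝ[X]) : (popOp c s p).natDegree ≤ p.natDegree := by
  have h : ∀ (f : ℕ → ℝ) (q : ℝ[X]), (diagOp f q).natDegree ≤ q.natDegree := by
    intro f q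
    rw [natDegree_le_iff_coeff_eq_zero]
    intro n hn
    rw [coeff_diagOp, coeff_eq_zero_of_natDegree_lt hn, mul_zero]
  calc _ ≤ _ := h _ _
    _ = _ := natDegree_taylor _ _
    _ ≤ _ := h _ _

lemma diagInv_X_mul (c : ℝ) (p : ℝ[X]) :
    diagOp (fun n => (Gamma (c + n))⁻¹) (X * p)
      = X * diagOp (fun n => (Gamma (c + 1 + n))⁻¹) p := by
  ext n
  rw [coeff_diagOp]
  cases n with
  | zero => simp
  | succ n =>
    rw [coeff_X_mul, coeff_X_mul, coeff_diagOp]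
    push_cast
    ring_nf

lemma hasSum_moment (s u : ℝ) (hs : 0 < s) (k : ℕ) : ∀ c : ℝ, 0 < c →
    HasSum (fun n : ℕ => (u / s) ^ n / n.factorial *
        (s ^ k * Gamma (n + c + k) / (Gamma (n + c) * Gamma (c + k))))
      (Real.exp (u / s) * (diagOp (fun n => (Gamma (c + n))⁻¹) ((X + C s) ^ k)).eval u) := by
  induction k with
  | zero =>
    intro c hc
    have h := NormedSpace.expSeries_div_hasSum_exp (u / s)
    rw [← Real.exp_eq_exp_ℝ] at h
    have e : diagOp (fun n => (Gamma (c + n))⁻¹) ((X + C s) ^ 0) = C (Gamma c)⁻¹ := by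
      rw [pow_zero, ← monomial_zero_one, diagOp_monomial]
      simp
    rw [e, eval_C]
    refine hasSum_of_eq (h.mul_right _) ?_
    intro n
    have : Gamma (n + c) ≠ 0 := (Gamma_pos_of_pos (by positivity)).ne'
    simp only [pow_zero, Nat.cast_zero, add_zero, one_mul]
    rw [div_mul_cancel_left₀ this]
  | succ k ih =>
    intro c hc
    have h1 := (ih c hc).mul_left s
    have h2 := (ih (c + 1) (by linarith)).mul_left u
    have h3 : HasSum (fun n : ℕ => (n : ℝ) * ((u / s) ^ n / n.factorial *
        (s ^ (k + 1) * Gamma (n + c + k) / (Gamma (n + c) * Gamma (c + 1 + k)))))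
        (u * (Real.exp (u / s) *
          (diagOp (fun n => (Gamma (c + 1 + n))⁻¹) ((X + C s) ^ k)).eval u)) := by
      rw [← hasSum_nat_add_iff' 1]
      simp only [Finset.range_one, Finset.sum_singleton, Nat.cast_zero, zero_mul, sub_zero]
      refine hasSum_of_eq h2 ?_
      intro n
      have e1 : ((n + 1 : ℕ) : ℝ) + c = n + (c + 1) := by push_cast; ring
      rw [e1, Nat.factorial_succ, pow_succ (u / s), pow_succ s]
      push_cast
      have : (n : ℝ) + 1 ≠ 0 := by positivity
      field_simp
    have h4 := h1.add h3
    have e : Real.exp (u / s) * (diagOp (fun n => (Gamma (c + n))⁻¹) ((X + C s) ^ (k + 1))).eval u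
        = s * (Real.exp (u / s) * (diagOp (fun n => (Gamma (c + n))⁻¹) ((X + C s) ^ k)).eval u)
        + (u * (Real.exp (u / s) *
          (diagOp (fun n => (Gamma (c + 1 + n))⁻¹) ((X + C s) ^ k)).eval u)) := by
      rw [pow_succ', add_mul, map_add, diagInv_X_mul, ← smul_eq_C_mul, map_smul]
      simp only [eval_add, eval_mul, eval_X, eval_smul, smul_eq_mul]
      ring
    rw [e]
    refine hasSum_of_eq h4 ?_
    intro n
    have g0 : Gamma (n + c) ≠ 0 := (Gamma_pos_of_pos (by positivity)).ne'
    have g1 : Gamma (c + k) ≠ 0 := (Gamma_pos_of_pos (by positivity)).ne'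
    have e1 : Gamma (c + 1 + k) = (c + k) * Gamma (c + k) := by
      rw [← Gamma_add_one (by positivity)]; ring_nf
    have e1' : Gamma (c + (k + 1 : ℕ)) = (c + k) * Gamma (c + k) := by
      rw [← Gamma_add_one (by positivity)]; push_cast; ring_nf
    have e2 : Gamma (n + c + (k + 1 : ℕ)) = (n + c + k) * Gamma (n + c + k) := by
      rw [← Gamma_add_one (by positivity)]; push_cast; ring_nf
    rw [e1, e1', e2]
    have : c + k ≠ 0 := by positivity
    field_simp
    ring

end Analytic

section Kernel
open Polynomial

lemma integrable_tsum_of {μ : Measure ℝ} {F : ℕ → ℝ → ℝ} (hF : ∀ n, Integrable (F n) μ)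
    (hs : Summable fun i => ∫ a, ‖F i a‖ ∂μ) : Integrable (fun a => ∑' i, F i a) μ := by
  refine ⟨(AEMeasurable.tsum fun i => (hF i).1.aemeasurable).aestronglyMeasurable, ?_⟩
  refine lt_of_le_of_lt (lintegral_mono fun a => enorm_tsum_le_tsum_enorm) ?_
  rw [lintegral_tsum (fun i => (hF i).1.enorm)]
  have h : ∀ i, ∫⁻ a, ‖F i a‖ₑ ∂μ = ENNReal.ofReal (∫ a, ‖F i a‖ ∂μ) := fun i =>
    (ofReal_integral_norm_eq_lintegral_enorm (hF i)).symm
  simp_rw [h]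
  rw [← ENNReal.ofReal_tsum_of_nonneg (fun i => integral_nonneg fun a => norm_nonneg _) hs]
  exact ENNReal.ofReal_lt_top

/-- Gamma densities. -/
noncomputable def gdens (c s : ℝ) (n : ℕ) (v : ℝ) : ℝ :=
  v ^ ((n : ℝ) + c - 1) * Real.exp (-(s⁻¹ * v)) / (s ^ ((n : ℝ) + c) * Gamma (n + c))

/-- Poisson mixture of gamma densities, for an arbitrary real parameter `u`. -/
noncomputable def fker (c s u v : ℝ) : ℝ :=
  ∑' n : ℕ, (Real.exp (-(u / s)) * ((u / s) ^ n / n.factorial)) * gdens c s n v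

lemma gdens_moment (c s : ℝ) (hc : 0 < c) (hs : 0 < s) (n k : ℕ) (K : ℝ) :
    IntegrableOn (fun v => v ^ k * (K * gdens c s n v)) (Set.Ioi 0) ∧
    ∫ v in Set.Ioi (0 : ℝ), v ^ k * (K * gdens c s n v)
      = K * (s ^ k * Gamma (n + c + k) / Gamma (n + c)) := by
  have e : Set.EqOn (fun v : ℝ => v ^ k * (K * gdens c s n v))
      (fun v => (K / (s ^ ((n : ℝ) + c) * Gamma (n + c))) *
        (v ^ (((n : ℝ) + c + k) - 1) * Real.exp (-(s⁻¹ * v)))) (Set.Ioi 0) := by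
    intro v hv
    have hv : 0 < v := hv
    simp only [gdens]
    rw [show (n : ℝ) + c + k - 1 = (n + c - 1) + k by ring, Real.rpow_add hv, Real.rpow_natCast]
    ring
  have hpos : 0 < (n : ℝ) + c + k := by positivity
  constructor
  · rw [integrableOn_congr_fun e measurableSet_Ioi]
    refine Integrable.const_mul ?_ _
    have := integrableOn_rpow_mul_exp_neg_mul_rpow (p := 1) (s := (n : ℝ) + c + k - 1) (b := s⁻¹)
      (by linarith) one_pos (by positivity)
    simpa [IntegrableOn] using this
  · rw [setIntegral_congr_fun measurableSet_Ioi e, integral_const_mul,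
      integral_rpow_mul_exp_neg_mul_Ioi hpos (by positivity)]
    have g0 : Gamma (n + c) ≠ 0 := (Gamma_pos_of_pos (by positivity)).ne'
    have : s ^ ((n : ℝ) + c) ≠ 0 := (Real.rpow_pos_of_pos hs _).ne'
    rw [one_div, inv_inv, Real.rpow_add hs ((n : ℝ) + c) k, Real.rpow_natCast]
    generalize s ^ ((n : ℝ) + c) = w at *
    field_simp

lemma gdens_nonneg (c s : ℝ) (hc : 0 < c) (hs : 0 < s) (n : ℕ) {v : ℝ} (hv : 0 < v) :
    0 ≤ gdens c s n v := by
  have g0 : 0 < Gamma (n + c) := (Gamma_pos_of_pos (by positivity))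
  unfold gdens
  positivity

lemma fker_moment (c s u : ℝ) (hc : 0 < c) (hs : 0 < s) (k : ℕ) :
    IntegrableOn (fun v => v ^ k * fker c s u v) (Set.Ioi 0) ∧
    ∫ v in Set.Ioi (0 : ℝ), v ^ k * fker c s u v = (popOp c s (X ^ k)).eval u := by
  have gk : Gamma (c + k) ≠ 0 := (Gamma_pos_of_pos (by positivity)).ne'
  set K : ℕ → ℝ := fun n => Real.exp (-(u / s)) * ((u / s) ^ n / n.factorial) with hK
  have e : (fun v => v ^ k * fker c s u v) = fun v => ∑' n, v ^ k * (K n * gdens c s n v) := by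
    funext v
    rw [tsum_mul_left]
    rfl
  have hI := fun n => (gdens_moment c s hc hs n k (K n)).1
  have hnorm : ∀ n, ∫ v in Set.Ioi (0 : ℝ), ‖v ^ k * (K n * gdens c s n v)‖
      = |K n| * (s ^ k * Gamma (n + c + k) / Gamma (n + c)) := by
    intro n
    rw [← (gdens_moment c s hc hs n k |K n|).2]
    refine setIntegral_congr_fun measurableSet_Ioi fun v hv => ?_
    have hv : 0 < v := hv
    simp only [norm_mul, norm_pow, Real.norm_eq_abs, abs_of_pos hv,
      abs_of_nonneg (gdens_nonneg c s hc hs n hv)]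
  have hS : Summable fun n => ∫ v in Set.Ioi (0 : ℝ), ‖v ^ k * (K n * gdens c s n v)‖ := by
    simp_rw [hnorm]
    have h := ((hasSum_moment s |u| hs k c hc).mul_left
      (Gamma (c + k) * Real.exp (-(u / s)))).summable
    refine h.congr fun n => ?_
    simp only [hK, abs_mul, abs_div, abs_pow, abs_of_pos hs, Real.abs_exp, Nat.abs_cast]
    field_simp
  rw [e]
  refine ⟨integrable_tsum_of hI hS, ?_⟩
  have h1 := hasSum_integral_of_summable_integral_norm hI hS
  have h2 := ((hasSum_moment s u hs k c hc).mul_left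
      (Gamma (c + k) * Real.exp (-(u / s))))
  have h3 : HasSum (fun n => ∫ v in Set.Ioi (0 : ℝ), v ^ k * (K n * gdens c s n v))
      (Gamma (c + k) * Real.exp (-(u / s)) * (Real.exp (u / s) *
        (diagOp (fun n => (Gamma (c + n))⁻¹) ((X + C s) ^ k)).eval u)) := by
    refine hasSum_of_eq h2 fun n => ?_
    rw [(gdens_moment c s hc hs n k (K n)).2]
    simp only [hK]
    field_simp
  rw [h1.unique h3, ← monomial_one_right_eq_X_pow, popOp_monomial, eval_mul, eval_C, one_mul,
    Real.exp_neg]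
  field_simp

lemma fker_poly (c s u : ℝ) (hc : 0 < c) (hs : 0 < s) (p : ℝ[X]) :
    IntegrableOn (fun v => p.eval v * fker c s u v) (Set.Ioi 0) ∧
    ∫ v in Set.Ioi (0 : ℝ), p.eval v * fker c s u v = (popOp c s p).eval u := by
  induction p using Polynomial.induction_on' with
  | add p q hp hq =>
    simp only [eval_add, add_mul]
    refine ⟨hp.1.add hq.1, ?_⟩
    rw [integral_add hp.1 hq.1, hp.2, hq.2, popOp_add, eval_add]
  | monomial n r =>
    obtain ⟨h1, h2⟩ := fker_moment c s u hc hs n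
    simp only [eval_monomial, mul_assoc]
    refine ⟨h1.const_mul r, ?_⟩
    rw [integral_const_mul, h2, ← monomial_one_right_eq_X_pow, popOp_monomial, popOp_monomial]
    simp only [eval_mul, eval_C]
    ring

lemma bessel_core (ν s x a : ℝ) (hs : 0 < s) (hx : 0 < x) (ha : 0 < a) (n : ℕ) :
    (1 / s) * (x / a) ^ (ν / 2) * (Real.sqrt (a * x) / s) ^ (2 * (n : ℝ) + ν)
      = (a / s) ^ n * x ^ ((n : ℝ) + (ν + 1) - 1) / s ^ ((n : ℝ) + (ν + 1)) := by
  obtain ⟨S, rfl⟩ : ∃ S, s = Real.exp S := ⟨Real.log s, (Real.exp_log hs).symm⟩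
  obtain ⟨Y, rfl⟩ : ∃ S, x = Real.exp S := ⟨Real.log x, (Real.exp_log hx).symm⟩
  obtain ⟨A, rfl⟩ : ∃ S, a = Real.exp S := ⟨Real.log a, (Real.exp_log ha).symm⟩
  rw [← Real.exp_add, ← Real.exp_half, ← Real.rpow_natCast, one_div, ← Real.exp_neg]
  simp only [← Real.exp_sub, ← Real.exp_mul, ← Real.exp_add]
  congr 1
  ring

lemma besqP_eq (ν t x a : ℝ) (ht : 0 < t) (hx : 0 < x) (ha : 0 < a) :
    besqP ν t x a = fker (ν + 1) (2 * t) a x := by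
  unfold besqP besselI fker
  rw [← tsum_mul_left]
  refine tsum_congr fun n => ?_
  have h := bessel_core ν (2 * t) x a (by positivity) hx ha n
  have e1 : Real.sqrt (a * x) / t / 2 = Real.sqrt (a * x) / (2 * t) := by field_simp
  have e2 : -(a + x) / (2 * t) = -(a / (2 * t)) + -((2 * t)⁻¹ * x) := by field_simp; ring
  rw [e1, e2, Real.exp_add, Real.Gamma_nat_eq_factorial]
  rw [gdens, show (n : ℝ) + 1 + ν = n + (ν + 1) by ring]
  linear_combination (Real.exp (-(a / (2 * t))) * Real.exp (-((2 * t)⁻¹ * x)) /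
    (n.factorial * Gamma (n + (ν + 1)))) * h

lemma besqQ_eq (ν t v y : ℝ) (ht : 0 < t) (hv : 0 < v) (hy : 0 < y) :
    besqQ ν t v y = fker (ν + 1) (2 * t) (-y) v := by
  unfold besqQ besselJ fker
  rw [← tsum_mul_left]
  refine tsum_congr fun n => ?_
  have h := bessel_core ν (2 * t) v y (by positivity) hv hy n
  have e1 : Real.sqrt (v * y) / t / 2 = Real.sqrt (y * v) / (2 * t) := by
    rw [mul_comm v y]; field_simp
  have e2 : (y - v) / (2 * t) = -(-y / (2 * t)) + -((2 * t)⁻¹ * v) := by field_simp; ring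
  rw [e1, e2, Real.exp_add, Real.Gamma_nat_eq_factorial]
  rw [gdens, show (n : ℝ) + 1 + ν = n + (ν + 1) by ring, neg_div (2 * t) y, neg_pow (y / (2 * t))]
  linear_combination (Real.exp (- -(y / (2 * t))) * Real.exp (-((2 * t)⁻¹ * v)) * (-1) ^ n /
    (n.factorial * Gamma (n + (ν + 1)))) * h

end Kernel

section Main
open Polynomial

lemma popOp_sum (c s : ℝ) {ι : Type*} (S : Finset ι) (f : ι → ℝ[X]) :
    popOp c s (∑ i ∈ S, f i) = ∑ i ∈ S, popOp c s (f i) := by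
  simp only [popOp, map_sum]

/-- The dual polynomials `M_ℓ`. -/
noncomputable def dualPoly (c s : ℝ) {N : ℕ} (a : Fin N → ℝ) (l : Fin N) : ℝ[X] :=
  (popOp c s ((Lagrange.basis Finset.univ a l).comp (-X))).comp (-X)

lemma eval_popOp_dualPoly (c s : ℝ) (hc : 0 < c) {N : ℕ} (a : Fin N → ℝ)
    (ha : Function.Injective a) (l m : Fin N) :
    (popOp c s (dualPoly c s a l)).eval (a m) = if l = m then 1 else 0 := by
  rw [dualPoly, popOp_inv c s hc]
  split_ifs with h
  · subst h
    exact Lagrange.eval_basis_self ha.injOn (Finset.mem_univ _)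
  · exact Lagrange.eval_basis_of_ne h (Finset.mem_univ _)

lemma natDegree_dualPoly (c s : ℝ) {N : ℕ} (a : Fin N → ℝ)
    (ha : Function.Injective a) (l : Fin N) : (dualPoly c s a l).natDegree < N := by
  have h0 : N ≠ 0 := by rintro rfl; exact l.elim0
  have h := Lagrange.natDegree_basis (s := Finset.univ) (v := a) ha.injOn (Finset.mem_univ l)
  rw [Finset.card_univ, Fintype.card_fin] at h
  have h1 : (dualPoly c s a l).natDegree ≤ N - 1 := by
    unfold dualPoly
    rw [natDegree_comp, natDegree_neg, natDegree_X, mul_one]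
    refine (natDegree_popOp_le _ _ _).trans ?_
    rw [natDegree_comp, natDegree_neg, natDegree_X, mul_one, h]
  omega

lemma det_dualPoly (c s : ℝ) (hc : 0 < c) {N : ℕ} (a : Fin N → ℝ)
    (ha : Function.Injective a) (y : Fin N → ℝ) :
    Matrix.det (Matrix.of fun r l => (dualPoly c s a l).eval (y r)) = vdm y / vdm a := by
  have hv : ∀ w : Fin N → ℝ, vdm w = (Matrix.vandermonde w).det := fun w =>
    (Matrix.det_vandermonde w).symm
  set A : Matrix (Fin N) (Fin N) ℝ := Matrix.of fun k l => (dualPoly c s a l).coeff k with hA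
  have h1 : (Matrix.of fun r l => (dualPoly c s a l).eval (y r)) = Matrix.vandermonde y * A := by
    ext r l
    rw [Matrix.mul_apply, Matrix.of_apply,
      eval_eq_sum_range' (natDegree_dualPoly c s a ha l), Finset.sum_range]
    exact Finset.sum_congr rfl fun k _ => by simp [hA, Matrix.vandermonde_apply, mul_comm]
  have h2 : (Matrix.of fun j k : Fin N => (popOp c s (X ^ (k : ℕ))).eval (a j)) * A = 1 := by
    ext j l
    rw [Matrix.mul_apply, Matrix.one_apply]
    have h := eval_popOp_dualPoly c s hc a ha l j
    rw [as_sum_range' _ _ (natDegree_dualPoly c s a ha l), popOp_sum, eval_finsetSum,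
      Finset.sum_range] at h
    rw [show (if j = l then (1 : ℝ) else 0) = if l = j then 1 else 0 by simp [eq_comm], ← h]
    refine Finset.sum_congr rfl fun k _ => ?_
    rw [Matrix.of_apply, ← monomial_one_right_eq_X_pow, popOp_monomial, popOp_monomial]
    simp [hA]
    ring
  have h3 := Matrix.det_eval_matrixOfPolynomials_eq_det_vandermonde a
    (fun k : Fin N => popOp c s (X ^ (k : ℕ))) (fun k => (coeff_popOp_X_pow c s hc k).2)
    (fun k => (coeff_popOp_X_pow c s hc k).1)
  have h4 := congrArg Matrix.det h2
  rw [Matrix.det_mul, ← h3, Matrix.det_one, ← hv] at h4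
  rw [h1, Matrix.det_mul, ← hv]
  have h5 : vdm a ≠ 0 := left_ne_zero_of_mul_eq_one h4
  rw [eq_div_iff h5, mul_assoc, mul_comm A.det, h4, mul_one]

lemma integral_besqQ (ν : ℝ) (hν : -1 < ν) {N : ℕ} (a : Fin N → ℝ)
    (t y : ℝ) (ht : 0 < t) (hy : 0 < y) (l : Fin N) :
    ∫ v in Set.Ioi (0 : ℝ),
      (∏ k ∈ Finset.univ.erase l, ((a k + v) / (a k - a l))) * besqQ ν t v y
      = (dualPoly (ν + 1) (2 * t) a l).eval y := by
  rw [dualPoly, eval_comp, eval_neg, eval_X,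
    ← (fker_poly (ν + 1) (2 * t) (-y) (by linarith) (by positivity) _).2]
  refine setIntegral_congr_fun measurableSet_Ioi fun v hv => ?_
  rw [besqQ_eq ν t v y ht hv hy]
  congr 1
  rw [eval_comp, eval_neg, eval_X, Lagrange.basis, eval_prod]
  refine Finset.prod_congr rfl fun k _ => ?_
  rw [Lagrange.basisDivisor, eval_mul, eval_C, eval_sub, eval_X, eval_C, ← neg_sub (a k) (a l),
    inv_neg]
  ring

end Main

/-- The single-time `n`-point correlation function of the noncolliding BESQ^{(ν)}
process started at `0 < a₁ < ⋯ < a_N` is the determinant of the kernel `K_t`. -/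
theorem single_time_correlation_determinantal
    (ν : ℝ) (hν : -1 < ν) (N : ℕ) (hN : 1 ≤ N)
    (a : Fin N → ℝ) (hapos : ∀ ℓ, 0 < a ℓ) (hamono : StrictMono a)
    (t : ℝ) (ht : 0 < t) (n : ℕ) (hn₁ : 1 ≤ n) (hn₂ : n ≤ N)
    (x : Fin n → ℝ) (hxpos : ∀ i, 0 < x i) (hxdist : Function.Injective x) :
    (1 / (N - n).factorial : ℝ) *
        ∫ z in Set.univ.pi (fun _ : Fin (N - n) => Set.Ioi (0 : ℝ)),
          (vdm (extendConfig hn₂ x z) / vdm a) *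
            Matrix.det (Matrix.of fun i j : Fin N =>
              besqP ν t (extendConfig hn₂ x z i) (a j))
      = Matrix.det (Matrix.of fun i j : Fin n => corrK ν a t (x i) (x j)) := by
  classical
  set c := ν + 1 with hc
  have hc0 : 0 < c := by linarith
  set s := 2 * t with hs
  have hs0 : 0 < s := by positivity
  have ha := hamono.injective
  set e : Fin n ⊕ Fin (N - n) ≃ Fin N :=
    finSumFinEquiv.trans (finCongr (Nat.add_sub_cancel' hn₂)) with he
  have hext : ∀ z r, extendConfig hn₂ x z (e r) = Sum.elim x z r := by
    intro z r
    rcases r with i | j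
    · have : ((e (Sum.inl i) : Fin N) : ℕ) = i := by simp [he]
      simp [extendConfig, this]
    · have : ((e (Sum.inr j) : Fin N) : ℕ) = n + j := by simp [he]
      simp [extendConfig, this]
  set φ : Fin n ⊕ Fin (N - n) → ℝ → ℝ := fun l y => (dualPoly c s a (e l)).eval y with hφ
  set ψ : Fin n ⊕ Fin (N - n) → ℝ → ℝ := fun l y => besqP ν t y (a (e l)) with hψ
  have hEq : ∀ l m, Set.EqOn (fun y => φ l y * ψ m y)
      (fun y => (dualPoly c s a (e l)).eval y * fker c s (a (e m)) y) (Set.Ioi 0) := by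
    intro l m y hy
    simp only [hφ, hψ]
    rw [besqP_eq ν t y _ ht hy (hapos _)]
  have hInt : ∀ l m, Integrable (fun y => φ l y * ψ m y) (volume.restrict (Set.Ioi (0 : ℝ))) := by
    intro l m
    exact (integrableOn_congr_fun (hEq l m) measurableSet_Ioi).2
      (fker_poly c s (a (e m)) hc0 hs0 _).1
  have hbi : ∀ l m, ∫ y in Set.Ioi (0 : ℝ), φ l y * ψ m y = if l = m then 1 else 0 := by
    intro l m
    rw [setIntegral_congr_fun measurableSet_Ioi (hEq l m), (fker_poly c s (a (e m)) hc0 hs0 _).2,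
      eval_popOp_dualPoly c s hc0 a ha]
    simp
  have key := integral_det (volume.restrict (Set.Ioi (0 : ℝ))) φ ψ hInt hbi x
  have hI : ∫ z in Set.univ.pi (fun _ : Fin (N - n) => Set.Ioi (0 : ℝ)),
          (vdm (extendConfig hn₂ x z) / vdm a) *
            Matrix.det (Matrix.of fun i j : Fin N =>
              besqP ν t (extendConfig hn₂ x z i) (a j))
      = ∫ z, Matrix.det (Matrix.of fun r c => φ c (Sum.elim x z r)) *
        Matrix.det (Matrix.of fun r c => ψ c (Sum.elim x z r))
          ∂(Measure.pi fun _ : Fin (N - n) => volume.restrict (Set.Ioi (0 : ℝ))) := by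
    rw [volume_pi, Measure.restrict_pi_pi]
    congr 1
    funext z
    rw [← det_dualPoly c s hc0 a ha, ← Matrix.det_submatrix_equiv_self e,
      ← Matrix.det_submatrix_equiv_self e (Matrix.of fun i j : Fin N =>
              besqP ν t (extendConfig hn₂ x z i) (a j))]
    congr 2
    · ext r l
      simp [hφ, hext]
    · ext r l
      simp [hψ, hext]
  rw [hI, key, Fintype.card_fin, ← mul_assoc, one_div, inv_mul_cancel₀ (by positivity), one_mul]
  congr 2
  ext i j
  rw [corrK, ← Equiv.sum_comp e]
  refine Finset.sum_congr rfl fun l _ => ?_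
  rw [integral_besqQ ν hν a t (x j) ht (hxpos j)]
end
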